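/- No point of T = ℍ/𝔞 is fixed simultaneously by the map (i;0) : x ↦ i·x and the map j' = (j;α) : x ↦ j·x + [(1+i)/2]; consequently the group Q̂₈ generated by these two maps acts on T without a global fixed point. -/

import Mathlib

/- STATEMENT 8: No point of T = ℍ/𝔞 is fixed simultaneously by (i;0) : x ↦ i·x and
j' = (j;α) : x ↦ j·x + [(1+i)/2]; consequently the group Q̂₈ generated by these two maps
acts on T without a global fixed point. -/

open scoped Quaternion

noncomputable def qi : ℍ[ℝ] := ⟨0, 1, 0, 0⟩
noncomputable def qj : ℍ[ℝ] := ⟨0, 0, 1, 0⟩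
noncomputable def qk : ℍ[ℝ] := ⟨0, 0, 0, 1⟩
noncomputable def qt : ℍ[ℝ] := (1 + qi + qj + qk) / 2
noncomputable def qα : ℍ[ℝ] := (1 + qi) / 2

/-- The Hurwitz order `𝔞 = ℤ·1 + ℤ·i + ℤ·j + ℤ·t` as an additive subgroup of `ℍ`. -/
noncomputable def hurwitz : AddSubgroup ℍ[ℝ] := AddSubgroup.closure {1, qi, qj, qt}

/-- The real torus `T = ℍ/𝔞`. -/
noncomputable abbrev T := ℍ[ℝ] ⧸ hurwitz

/-- The class map `ℍ → T = ℍ/𝔞`. -/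
noncomputable def π : ℍ[ℝ] → T := QuotientAddGroup.mk

theorem qi_re : qi.re = 0 := rfl
theorem qi_imI : qi.imI = 1 := rfl
theorem qi_imJ : qi.imJ = 0 := rfl
theorem qi_imK : qi.imK = 0 := rfl
theorem qj_re : qj.re = 0 := rfl
theorem qj_imI : qj.imI = 0 := rfl
theorem qj_imJ : qj.imJ = 1 := rfl
theorem qj_imK : qj.imK = 0 := rfl
theorem qk_re : qk.re = 0 := rfl
theorem qk_imI : qk.imI = 0 := rfl
theorem qk_imJ : qk.imJ = 0 := rfl
theorem qk_imK : qk.imK = 1 := rfl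

theorem half_add_half (x : ℍ[ℝ]) : x / 2 + x / 2 = x := by
  rw [← mul_two, div_mul_cancel₀]
  intro h
  have h1 := congrArg (fun q : ℍ[ℝ] => q.re) h
  have h2 : (2 : ℍ[ℝ]).re = 2 := by
    rw [← one_add_one_eq_two, Quaternion.re_add, Quaternion.re_one]
    norm_num
  simp [h2] at h1

theorem half_coords (x : ℍ[ℝ]) : 2 * (x / 2).re = x.re ∧ 2 * (x / 2).imI = x.imI ∧
    2 * (x / 2).imJ = x.imJ ∧ 2 * (x / 2).imK = x.imK := by
  have h := half_add_half x
  have h1 := congrArg (fun q : ℍ[ℝ] => q.re) h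
  have h2 := congrArg (fun q : ℍ[ℝ] => q.imI) h
  have h3 := congrArg (fun q : ℍ[ℝ] => q.imJ) h
  have h4 := congrArg (fun q : ℍ[ℝ] => q.imK) h
  simp only [Quaternion.re_add, Quaternion.imI_add, Quaternion.imJ_add, Quaternion.imK_add]
    at h1 h2 h3 h4
  refine ⟨?_, ?_, ?_, ?_⟩ <;> linarith

theorem hurwitz_coords (x : ℍ[ℝ]) (hx : x ∈ hurwitz) : ∃ a b c d : ℤ,
    2 * x.re = 2 * a + d ∧ 2 * x.imI = 2 * b + d ∧ 2 * x.imJ = 2 * c + d ∧ 2 * x.imK = d := by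
  have ht : 2 * qt.re = 1 ∧ 2 * qt.imI = 1 ∧ 2 * qt.imJ = 1 ∧ 2 * qt.imK = 1 := by
    simpa [qt, qi_re, qi_imI, qi_imJ, qi_imK, qj_re, qj_imI, qj_imJ, qj_imK, qk_re, qk_imI, qk_imJ, qk_imK] using half_coords (1 + qi + qj + qk)
  induction hx using AddSubgroup.closure_induction with
  | mem x h =>
    rcases h with h | h | h | h <;> rw [h]
    · exact ⟨1, 0, 0, 0, by simp⟩
    · exact ⟨0, 1, 0, 0, by simp [qi_re, qi_imI, qi_imJ, qi_imK, qj_re, qj_imI, qj_imJ, qj_imK]⟩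
    · exact ⟨0, 0, 1, 0, by simp [qi_re, qi_imI, qi_imJ, qi_imK, qj_re, qj_imI, qj_imJ, qj_imK]⟩
    · exact ⟨0, 0, 0, 1, by simp [ht]⟩
  | zero => exact ⟨0, 0, 0, 0, by simp⟩
  | add x y _ _ ih1 ih2 =>
    obtain ⟨a, b, c, d, h1, h2, h3, h4⟩ := ih1
    obtain ⟨a', b', c', d', h1', h2', h3', h4'⟩ := ih2
    refine ⟨a + a', b + b', c + c', d + d', ?_, ?_, ?_, ?_⟩ <;> simp <;> linarith
  | neg x _ h1 =>
    obtain ⟨a, b, c, d, h1, h2, h3, h4⟩ := h1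
    refine ⟨-a, -b, -c, -d, ?_, ?_, ?_, ?_⟩ <;> simp <;> linarith

theorem no_common_aux
    (fi fj : Equiv.Perm T)
    (hfi : ∀ x : ℍ[ℝ], fi (π x) = π (qi * x))
    (hfj : ∀ x : ℍ[ℝ], fj (π x) = π (qj * x + qα)) :
    ¬ ∃ x : T, fi x = x ∧ fj x = x := by
  rintro ⟨x, h1, h2⟩
  obtain ⟨x, rfl⟩ : ∃ y, π y = x := QuotientAddGroup.mk_surjective x
  rw [hfi] at h1
  rw [hfj] at h2
  have hα : 2 * qα.re = 1 ∧ 2 * qα.imI = 1 ∧ 2 * qα.imJ = 0 ∧ 2 * qα.imK = 0 := by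
    have h := half_coords (1 + qi)
    simp only [Quaternion.re_add, Quaternion.imI_add, Quaternion.imJ_add, Quaternion.imK_add,
      Quaternion.re_one, Quaternion.imI_one, Quaternion.imJ_one, Quaternion.imK_one,
      qi_re, qi_imI, qi_imJ, qi_imK, qj_re, qj_imI, qj_imJ, qj_imK, add_zero, zero_add] at h
    exact h
  obtain ⟨g1, g2, g3, g4⟩ := hα
  obtain ⟨a, b, c, d, e1, e2, e3, e4⟩ := hurwitz_coords _ (QuotientAddGroup.eq.1 h1)
  obtain ⟨a', b', c', d', f1, f2, f3, f4⟩ := hurwitz_coords _ (QuotientAddGroup.eq.1 h2)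
  simp [qi_re, qi_imI, qi_imJ, qi_imK, qj_re, qj_imI, qj_imJ, qj_imK] at e1 e2 e3 e4
  simp [qi_re, qi_imI, qi_imJ, qi_imK, qj_re, qj_imI, qj_imJ, qj_imK] at f1 f2 f3 f4
  have key : ((2 * c - 1 : ℤ) : ℝ) = ((2 * (a' + c' + d') : ℤ) : ℝ) := by
    push_cast
    linarith
  have h := Int.cast_injective key
  omega

theorem no_common_fixed_point
    (fi fj : Equiv.Perm T)
    (hfi : ∀ x : ℍ[ℝ], fi (π x) = π (qi * x))
    (hfj : ∀ x : ℍ[ℝ], fj (π x) = π (qj * x + qα)) :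
    (¬ ∃ x : T, fi x = x ∧ fj x = x) ∧
    ¬ ∃ x : T, ∀ g ∈ Subgroup.closure ({fi, fj} : Set (Equiv.Perm T)), g x = x := by
  have h0 := no_common_aux fi fj hfi hfj
  refine ⟨h0, ?_⟩
  rintro ⟨x, hx⟩
  exact h0 ⟨x, hx fi (Subgroup.subset_closure (by simp)),
    hx fj (Subgroup.subset_closure (by simp))⟩
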